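/- (Star with an external center node) Let X_1, X_2, X_3, X_4 and X_c be ±1-valued random variables on a standard Borel probability space with Var(X_l) > 0 for all of them, such that for all distinct j, k ∈ {1, 2, 3, 4}, X_j and X_k are conditionally independent given the σ-algebra generated by X_c. Let X_l^e = ε_l X_l (l = 1, …, 4) be noisy versions, where ε_1, …, ε_4 are ±1-valued with P(ε_l = −1) = q_l ∈ [0, 1/2) and ε_1, …, ε_4, (X_1, …, X_4, X_c) are mutually independent, and write Σ'_{i,j} = Cov(X_i^e, X_j^e). Then Σ'_{1,3}·Σ'_{2,4} = Σ'_{1,4}·Σ'_{2,3} = Σ'_{1,2}·Σ'_{3,4}. -/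

import Mathlib

open MeasureTheory ProbabilityTheory

/-- Covariance `Cov(X,Y) = E[XY] - E[X]E[Y]`. -/
noncomputable def cov {Ω : Type*} [MeasurableSpace Ω] (μ : Measure Ω) (X Y : Ω → ℝ) : ℝ :=
  (∫ ω, X ω * Y ω ∂μ) - (∫ ω, X ω ∂μ) * (∫ ω, Y ω ∂μ)

/-- Variance `Var(X) = Cov(X,X)`. -/
noncomputable def var {Ω : Type*} [MeasurableSpace Ω] (μ : Measure Ω) (X : Ω → ℝ) : ℝ :=
  cov μ X X

/-!
Let `X` and `Y` be conditionally independent given `Z`. By the law of total covariance, `Cov(X, Y)`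
is the covariance of `E[X | Z]` and `E[Y | Z]`. Every function on two points is affine, so for a
two-valued `Z` both are affine in `Z`, whence `Cov(X, Y) = Cov(X, Z) Cov(Y, Z) / Var(Z)`.
Independent noise multiplies this covariance by `E[ε] E[δ]`. So `Σ'_{i,j} = s_i s_j / Var(X_c)` for
`i ≠ j`, with `s_l = E[ε_l] Cov(X_l, X_c)`, and each of the three products is
`s_1 s_2 s_3 s_4 / Var(X_c)²`.
-/

theorem covariance_congr_ae {Ω : Type*} [MeasurableSpace Ω] {μ : Measure Ω}
    {X X' Y Y' : Ω → ℝ} (hX : X =ᵐ[μ] X') (hY : Y =ᵐ[μ] Y') :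
    cov[X, Y; μ] = cov[X', Y'; μ] := by
  rw [covariance, covariance, integral_congr_ae hX, integral_congr_ae hY]
  refine integral_congr_ae ?_
  filter_upwards [hX, hY] with ω hXω hYω
  rw [hXω, hYω]

section CondIndepFun

variable {Ω : Type*} {m mΩ : MeasurableSpace Ω} [StandardBorelSpace Ω] {μ : Measure Ω}
  {X Y : Ω → ℝ}

theorem ae_indepFun_condExpKernel_of_condIndepFun [IsFiniteMeasure μ] {hm : m ≤ mΩ}
    (hX : Measurable X) (hY : Measurable Y) (h : CondIndepFun m hm X Y μ) :
    ∀ᵐ ω ∂μ, X ⟂ᵢ[condExpKernel μ m ω] Y := by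
  have hprod := ae_of_ae_trim hm <| (condIndepFun_iff_map_prod_eq_prod_map_map hX hY).1 h
  filter_upwards [hprod] with ω hω
  rw [Kernel.map_apply _ (by fun_prop), Kernel.prod_apply, Kernel.map_apply _ hX,
    Kernel.map_apply _ hY] at hω
  exact (indepFun_iff_map_prod_eq_prod_map_map hX.aemeasurable hY.aemeasurable).2 hω

theorem condExp_mul_of_condIndepFun [IsFiniteMeasure μ] {hm : m ≤ mΩ}
    (hX : Measurable X) (hY : Measurable Y) (hXint : Integrable X μ) (hYint : Integrable Y μ)
    (hXY : Integrable (X * Y) μ) (h : CondIndepFun m hm X Y μ) :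
    μ[X * Y | m] =ᵐ[μ] μ[X | m] * μ[Y | m] := by
  filter_upwards [condExp_ae_eq_integral_condExpKernel hm hXint,
    condExp_ae_eq_integral_condExpKernel hm hYint, condExp_ae_eq_integral_condExpKernel hm hXY,
    ae_indepFun_condExpKernel_of_condIndepFun hX hY h] with ω hXω hYω hXYω hω
  rw [Pi.mul_apply, hXω, hYω, hXYω]
  exact hω.integral_mul_eq_mul_integral hX.aestronglyMeasurable hY.aestronglyMeasurable

theorem covariance_condExp_condExp_of_condIndepFun [IsProbabilityMeasure μ] {hm : m ≤ mΩ}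
    (hX : Measurable X) (hY : Measurable Y) (hX2 : MemLp X 2 μ) (hY2 : MemLp Y 2 μ)
    (h : CondIndepFun m hm X Y μ) :
    cov[μ[X | m], μ[Y | m]; μ] = cov[X, Y; μ] := by
  have hmul := condExp_mul_of_condIndepFun hX hY (hX2.integrable one_le_two)
    (hY2.integrable one_le_two) (hX2.integrable_mul hY2) h
  rw [covariance_eq_sub (hX2.condExp one_le_two) (hY2.condExp one_le_two),
    covariance_eq_sub hX2 hY2, ← integral_congr_ae hmul, integral_condExp hm,
    integral_condExp hm, integral_condExp hm]

end CondIndepFun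

theorem exists_affine_of_two_points {K : Type*} [Field K] (g : K → K) (u v : K) :
    ∃ a b : K, g u = a + b * u ∧ g v = a + b * v := by
  obtain rfl | huv := eq_or_ne u v
  · exact ⟨g u, 0, by simp⟩
  · have : u - v ≠ 0 := sub_ne_zero.2 huv
    refine ⟨g u - (g u - g v) / (u - v) * u, (g u - g v) / (u - v), ?_, ?_⟩ <;> field_simp <;> ring

section TwoValued

variable {Ω : Type*} [MeasurableSpace Ω] {μ : Measure Ω} {X Y Z : Ω → ℝ} {u v : ℝ}

theorem memLp_of_ae_eq_or_eq [IsFiniteMeasure μ] {p : ENNReal} (hZ : AEStronglyMeasurable Z μ)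
    (huv : ∀ᵐ ω ∂μ, Z ω = u ∨ Z ω = v) : MemLp Z p μ := by
  refine MemLp.of_bound hZ (max |u| |v|) ?_
  filter_upwards [huv] with ω hω
  rcases hω with h | h <;> simp [h]

theorem exists_condExp_comap_ae_eq_affine (huv : ∀ᵐ ω ∂μ, Z ω = u ∨ Z ω = v) (X : Ω → ℝ) :
    ∃ a b : ℝ, μ[X | MeasurableSpace.comap Z inferInstance] =ᵐ[μ] fun ω => a + b * Z ω := by
  obtain ⟨g, -, hg⟩ := (stronglyMeasurable_condExp (μ := μ) (f := X)
    (m := MeasurableSpace.comap Z inferInstance)).exists_eq_measurable_comp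
  obtain ⟨a, b, hu, hv⟩ := exists_affine_of_two_points g u v
  refine ⟨a, b, ?_⟩
  filter_upwards [huv] with ω hω
  rcases hω with h | h <;> simp [hg, h, hu, hv]

theorem covariance_affine_affine [IsProbabilityMeasure μ] (hZ : Integrable Z μ) (a b c d : ℝ) :
    cov[fun ω => a + b * Z ω, fun ω => c + d * Z ω; μ] = b * d * Var[Z; μ] := by
  rw [covariance_const_add_left (hZ.const_mul b), covariance_const_add_right (hZ.const_mul d),
    covariance_const_mul_left, covariance_const_mul_right, covariance_self hZ.aemeasurable,
    mul_assoc]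

variable [StandardBorelSpace Ω] [IsProbabilityMeasure μ]

theorem covariance_eq_of_condExp_comap_affine {a b c d : ℝ} (hX : Measurable X)
    (hY : Measurable Y) (hZ : Measurable Z) (hX2 : MemLp X 2 μ) (hY2 : MemLp Y 2 μ)
    (hZint : Integrable Z μ) (h : X ⟂ᵢ[Z, hZ; μ] Y)
    (hXZ : μ[X | MeasurableSpace.comap Z inferInstance] =ᵐ[μ] fun ω => a + b * Z ω)
    (hYZ : μ[Y | MeasurableSpace.comap Z inferInstance] =ᵐ[μ] fun ω => c + d * Z ω) :
    cov[X, Y; μ] = b * d * Var[Z; μ] := by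
  rw [← covariance_condExp_condExp_of_condIndepFun hX hY hX2 hY2 h, covariance_congr_ae hXZ hYZ,
    covariance_affine_affine hZint]

-- If `Z` is almost surely constant, both sides are `0`, the right one as a division by `0`.
theorem covariance_eq_mul_div_variance_of_condIndepFun (hX : Measurable X) (hY : Measurable Y)
    (hZ : Measurable Z) (hX2 : MemLp X 2 μ) (hY2 : MemLp Y 2 μ)
    (huv : ∀ᵐ ω ∂μ, Z ω = u ∨ Z ω = v) (h : X ⟂ᵢ[Z, hZ; μ] Y) :
    cov[X, Y; μ] = cov[X, Z; μ] * cov[Y, Z; μ] / Var[Z; μ] := by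
  have hZ2 : MemLp Z 2 μ := memLp_of_ae_eq_or_eq hZ.aestronglyMeasurable huv
  have hZint : Integrable Z μ := hZ2.integrable one_le_two
  obtain ⟨a, b, hXZ⟩ := exists_condExp_comap_ae_eq_affine huv X
  obtain ⟨c, d, hYZ⟩ := exists_condExp_comap_ae_eq_affine huv Y
  have hZZ : μ[Z | MeasurableSpace.comap Z inferInstance] =ᵐ[μ] fun ω => 0 + 1 * Z ω := by
    rw [condExp_of_stronglyMeasurable hZ.comap_le (comap_measurable Z).stronglyMeasurable hZint]
    simp
  rw [covariance_eq_of_condExp_comap_affine hX hY hZ hX2 hY2 hZint h hXZ hYZ,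
    covariance_eq_of_condExp_comap_affine hX hZ hZ hX2 hZ2 hZint
      (condIndepFun_self_right hX hZ) hXZ hZZ,
    covariance_eq_of_condExp_comap_affine hY hZ hZ hY2 hZ2 hZint
      (condIndepFun_self_right hY hZ) hYZ hZZ,
    mul_one, mul_one, mul_mul_mul_comm, mul_div_assoc, mul_self_div_self]

end TwoValued

section Noise

variable {Ω : Type*} [MeasurableSpace Ω] {μ : Measure Ω} {X Y Z ε δ : Ω → ℝ} {u v : ℝ}

theorem cov_eq_covariance [IsProbabilityMeasure μ] (hX : MemLp X 2 μ) (hY : MemLp Y 2 μ) :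
    cov μ X Y = cov[X, Y; μ] :=
  (covariance_eq_sub hX hY).symm

theorem cov_mul_mul_of_indepFun (hX : AEStronglyMeasurable X μ) (hY : AEStronglyMeasurable Y μ)
    (hε : AEStronglyMeasurable ε μ) (hδ : AEStronglyMeasurable δ μ) (hεδ : ε ⟂ᵢ[μ] δ)
    (hind : (fun ω => (ε ω, δ ω)) ⟂ᵢ[μ] (fun ω => (X ω, Y ω))) :
    cov μ (fun ω => ε ω * X ω) (fun ω => δ ω * Y ω)
      = (∫ ω, ε ω ∂μ) * (∫ ω, δ ω ∂μ) * cov μ X Y := by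
  have hεX : ∫ ω, ε ω * X ω ∂μ = (∫ ω, ε ω ∂μ) * ∫ ω, X ω ∂μ :=
    (hind.comp measurable_fst measurable_fst).integral_fun_mul_eq_mul_integral hε hX
  have hδY : ∫ ω, δ ω * Y ω ∂μ = (∫ ω, δ ω ∂μ) * ∫ ω, Y ω ∂μ :=
    (hind.comp measurable_snd measurable_snd).integral_fun_mul_eq_mul_integral hδ hY
  have hprod : ∫ ω, (ε ω * X ω) * (δ ω * Y ω) ∂μ
      = (∫ ω, ε ω ∂μ) * (∫ ω, δ ω ∂μ) * ∫ ω, X ω * Y ω ∂μ := by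
    simp only [fun ω => mul_mul_mul_comm (ε ω) (X ω) (δ ω) (Y ω)]
    rw [← hεδ.integral_fun_mul_eq_mul_integral hε hδ]
    exact (hind.comp measurable_mul measurable_mul).integral_fun_mul_eq_mul_integral
      (hε.mul hδ) (hX.mul hY)
  rw [cov, cov, hεX, hδY, hprod]
  ring

theorem cov_mul_mul_of_condIndepFun [StandardBorelSpace Ω] [IsProbabilityMeasure μ]
    (hX : Measurable X) (hY : Measurable Y) (hZ : Measurable Z)
    (hX2 : MemLp X 2 μ) (hY2 : MemLp Y 2 μ) (huv : ∀ᵐ ω ∂μ, Z ω = u ∨ Z ω = v)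
    (hε : AEStronglyMeasurable ε μ) (hδ : AEStronglyMeasurable δ μ)
    (hXY : X ⟂ᵢ[Z, hZ; μ] Y) (hεδ : ε ⟂ᵢ[μ] δ)
    (hind : (fun ω => (ε ω, δ ω)) ⟂ᵢ[μ] (fun ω => (X ω, Y ω))) :
    cov μ (fun ω => ε ω * X ω) (fun ω => δ ω * Y ω)
      = ((∫ ω, ε ω ∂μ) * cov[X, Z; μ]) * ((∫ ω, δ ω ∂μ) * cov[Y, Z; μ]) / Var[Z; μ] := by
  rw [cov_mul_mul_of_indepFun hX.aestronglyMeasurable hY.aestronglyMeasurable hε hδ hεδ hind,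
    cov_eq_covariance hX2 hY2,
    covariance_eq_mul_div_variance_of_condIndepFun hX hY hZ hX2 hY2 huv hXY]
  ring

end Noise

theorem star_external_equality_general {Ω : Type*} [MeasurableSpace Ω] [StandardBorelSpace Ω]
    {μ : Measure Ω} [IsProbabilityMeasure μ] {X1 X2 X3 X4 Xc ε1 ε2 ε3 ε4 : Ω → ℝ} {u v : ℝ}
    (hX1 : Measurable X1) (hX2 : Measurable X2) (hX3 : Measurable X3) (hX4 : Measurable X4)
    (hXc : Measurable Xc)
    (hL1 : MemLp X1 2 μ) (hL2 : MemLp X2 2 μ) (hL3 : MemLp X3 2 μ) (hL4 : MemLp X4 2 μ)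
    (huv : ∀ᵐ ω ∂μ, Xc ω = u ∨ Xc ω = v)
    (hε1 : Integrable ε1 μ) (hε2 : Integrable ε2 μ) (hε3 : Integrable ε3 μ)
    (hε4 : Integrable ε4 μ)
    (hci12 : X1 ⟂ᵢ[Xc, hXc; μ] X2) (hci13 : X1 ⟂ᵢ[Xc, hXc; μ] X3)
    (hci14 : X1 ⟂ᵢ[Xc, hXc; μ] X4) (hci23 : X2 ⟂ᵢ[Xc, hXc; μ] X3)
    (hci24 : X2 ⟂ᵢ[Xc, hXc; μ] X4) (hci34 : X3 ⟂ᵢ[Xc, hXc; μ] X4)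
    (hindep1 : ε1 ⟂ᵢ[μ] ε2)
    (hindep2 : (fun ω => (ε1 ω, ε2 ω)) ⟂ᵢ[μ] ε3)
    (hindep3 : (fun ω => (ε1 ω, ε2 ω, ε3 ω)) ⟂ᵢ[μ] ε4)
    (hindep4 : (fun ω => (ε1 ω, ε2 ω, ε3 ω, ε4 ω)) ⟂ᵢ[μ]
      (fun ω => (X1 ω, X2 ω, X3 ω, X4 ω))) :
    cov μ (fun ω => ε1 ω * X1 ω) (fun ω => ε3 ω * X3 ω)
        * cov μ (fun ω => ε2 ω * X2 ω) (fun ω => ε4 ω * X4 ω)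
      = cov μ (fun ω => ε1 ω * X1 ω) (fun ω => ε4 ω * X4 ω)
        * cov μ (fun ω => ε2 ω * X2 ω) (fun ω => ε3 ω * X3 ω) ∧
    cov μ (fun ω => ε1 ω * X1 ω) (fun ω => ε4 ω * X4 ω)
        * cov μ (fun ω => ε2 ω * X2 ω) (fun ω => ε3 ω * X3 ω)
      = cov μ (fun ω => ε1 ω * X1 ω) (fun ω => ε2 ω * X2 ω)
        * cov μ (fun ω => ε3 ω * X3 ω) (fun ω => ε4 ω * X4 ω) := by
  have pair {π : ℝ × ℝ × ℝ × ℝ → ℝ × ℝ} (hπ : Measurable π) := hindep4.comp hπ hπ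
  rw [cov_mul_mul_of_condIndepFun hX1 hX2 hXc hL1 hL2 huv hε1.1 hε2.1 hci12 hindep1
      (pair (π := fun p => (p.1, p.2.1)) (by fun_prop)),
    cov_mul_mul_of_condIndepFun hX1 hX3 hXc hL1 hL3 huv hε1.1 hε3.1 hci13
      (hindep2.comp measurable_fst measurable_id)
      (pair (π := fun p => (p.1, p.2.2.1)) (by fun_prop)),
    cov_mul_mul_of_condIndepFun hX1 hX4 hXc hL1 hL4 huv hε1.1 hε4.1 hci14
      (hindep3.comp measurable_fst measurable_id)
      (pair (π := fun p => (p.1, p.2.2.2)) (by fun_prop)),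
    cov_mul_mul_of_condIndepFun hX2 hX3 hXc hL2 hL3 huv hε2.1 hε3.1 hci23
      (hindep2.comp measurable_snd measurable_id)
      (pair (π := fun p => (p.2.1, p.2.2.1)) (by fun_prop)),
    cov_mul_mul_of_condIndepFun hX2 hX4 hXc hL2 hL4 huv hε2.1 hε4.1 hci24
      (hindep3.comp measurable_snd.fst measurable_id)
      (pair (π := fun p => (p.2.1, p.2.2.2)) (by fun_prop)),
    cov_mul_mul_of_condIndepFun hX3 hX4 hXc hL3 hL4 huv hε3.1 hε4.1 hci34
      (hindep3.comp measurable_snd.snd measurable_id)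
      (pair (π := fun p => (p.2.2.1, p.2.2.2)) (by fun_prop))]
  constructor <;> ring

/-- Star with an external center node: if ±1-valued `X_1, X_2, X_3, X_4, X_c`
with positive variances are such that `X_j ⊥ X_k | σ(X_c)` for all distinct `j, k ∈ {1,2,3,4}`,
and `X_l^e = ε_l X_l` (`l = 1, …, 4`) are noisy versions with flip probabilities
`q_l ∈ [0, 1/2)`, where `ε_1, …, ε_4, (X_1, …, X_4, X_c)` are mutually independent, then the
noisy covariances satisfy `Σ'_{1,3} Σ'_{2,4} = Σ'_{1,4} Σ'_{2,3} = Σ'_{1,2} Σ'_{3,4}`. -/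
theorem star_external_equality {Ω : Type*} [MeasurableSpace Ω] [StandardBorelSpace Ω]
    (μ : Measure Ω) [IsProbabilityMeasure μ]
    (X1 X2 X3 X4 Xc ε1 ε2 ε3 ε4 : Ω → ℝ) (q1 q2 q3 q4 : ℝ)
    (hX1 : Measurable X1) (hX2 : Measurable X2) (hX3 : Measurable X3) (hX4 : Measurable X4) (hXc : Measurable Xc)
    (hε1 : Measurable ε1) (hε2 : Measurable ε2) (hε3 : Measurable ε3) (hε4 : Measurable ε4)
    (hX1pm : ∀ᵐ ω ∂μ, X1 ω = 1 ∨ X1 ω = -1)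
    (hX2pm : ∀ᵐ ω ∂μ, X2 ω = 1 ∨ X2 ω = -1)
    (hX3pm : ∀ᵐ ω ∂μ, X3 ω = 1 ∨ X3 ω = -1)
    (hX4pm : ∀ᵐ ω ∂μ, X4 ω = 1 ∨ X4 ω = -1)
    (hXcpm : ∀ᵐ ω ∂μ, Xc ω = 1 ∨ Xc ω = -1)
    (hε1pm : ∀ᵐ ω ∂μ, ε1 ω = 1 ∨ ε1 ω = -1)
    (hε2pm : ∀ᵐ ω ∂μ, ε2 ω = 1 ∨ ε2 ω = -1)
    (hε3pm : ∀ᵐ ω ∂μ, ε3 ω = 1 ∨ ε3 ω = -1)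
    (hε4pm : ∀ᵐ ω ∂μ, ε4 ω = 1 ∨ ε4 ω = -1)
    (hvar1 : 0 < var μ X1) (hvar2 : 0 < var μ X2)
    (hvar3 : 0 < var μ X3) (hvar4 : 0 < var μ X4) (hvarc : 0 < var μ Xc)
    -- star with external center: `X_j ⊥ X_k | σ(X_c)` for all distinct `j, k ∈ {1, 2, 3, 4}`:
    (hci12 : CondIndepFun (MeasurableSpace.comap Xc inferInstance) hXc.comap_le X1 X2 μ)
    (hci13 : CondIndepFun (MeasurableSpace.comap Xc inferInstance) hXc.comap_le X1 X3 μ)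
    (hci14 : CondIndepFun (MeasurableSpace.comap Xc inferInstance) hXc.comap_le X1 X4 μ)
    (hci21 : CondIndepFun (MeasurableSpace.comap Xc inferInstance) hXc.comap_le X2 X1 μ)
    (hci23 : CondIndepFun (MeasurableSpace.comap Xc inferInstance) hXc.comap_le X2 X3 μ)
    (hci24 : CondIndepFun (MeasurableSpace.comap Xc inferInstance) hXc.comap_le X2 X4 μ)
    (hci31 : CondIndepFun (MeasurableSpace.comap Xc inferInstance) hXc.comap_le X3 X1 μ)
    (hci32 : CondIndepFun (MeasurableSpace.comap Xc inferInstance) hXc.comap_le X3 X2 μ)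
    (hci34 : CondIndepFun (MeasurableSpace.comap Xc inferInstance) hXc.comap_le X3 X4 μ)
    (hci41 : CondIndepFun (MeasurableSpace.comap Xc inferInstance) hXc.comap_le X4 X1 μ)
    (hci42 : CondIndepFun (MeasurableSpace.comap Xc inferInstance) hXc.comap_le X4 X2 μ)
    (hci43 : CondIndepFun (MeasurableSpace.comap Xc inferInstance) hXc.comap_le X4 X3 μ)
    -- flip probabilities:
    (hq1 : (μ {ω | ε1 ω = -1}).toReal = q1) (hq1' : 0 ≤ q1) (hq1'' : q1 < 1 / 2)
    (hq2 : (μ {ω | ε2 ω = -1}).toReal = q2) (hq2' : 0 ≤ q2) (hq2'' : q2 < 1 / 2)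
    (hq3 : (μ {ω | ε3 ω = -1}).toReal = q3) (hq3' : 0 ≤ q3) (hq3'' : q3 < 1 / 2)
    (hq4 : (μ {ω | ε4 ω = -1}).toReal = q4) (hq4' : 0 ≤ q4) (hq4'' : q4 < 1 / 2)
    -- mutual independence of `ε_1, ε_2, ε_3, ε_4, (X_1, X_2, X_3, X_4, X_c)`:
    (hindep1 : IndepFun ε1 ε2 μ)
    (hindep2 : IndepFun (fun ω => (ε1 ω, ε2 ω)) ε3 μ)
    (hindep3 : IndepFun (fun ω => (ε1 ω, ε2 ω, ε3 ω)) ε4 μ)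
    (hindep4 : IndepFun (fun ω => (ε1 ω, ε2 ω, ε3 ω, ε4 ω))
      (fun ω => (X1 ω, X2 ω, X3 ω, X4 ω, Xc ω)) μ) :
    cov μ (fun ω => ε1 ω * X1 ω) (fun ω => ε3 ω * X3 ω)
        * cov μ (fun ω => ε2 ω * X2 ω) (fun ω => ε4 ω * X4 ω)
      = cov μ (fun ω => ε1 ω * X1 ω) (fun ω => ε4 ω * X4 ω)
        * cov μ (fun ω => ε2 ω * X2 ω) (fun ω => ε3 ω * X3 ω) ∧
    cov μ (fun ω => ε1 ω * X1 ω) (fun ω => ε4 ω * X4 ω)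
        * cov μ (fun ω => ε2 ω * X2 ω) (fun ω => ε3 ω * X3 ω)
      = cov μ (fun ω => ε1 ω * X1 ω) (fun ω => ε2 ω * X2 ω)
        * cov μ (fun ω => ε3 ω * X3 ω) (fun ω => ε4 ω * X4 ω) := by
  exact star_external_equality_general hX1 hX2 hX3 hX4 hXc
    (memLp_of_ae_eq_or_eq hX1.aestronglyMeasurable hX1pm)
    (memLp_of_ae_eq_or_eq hX2.aestronglyMeasurable hX2pm)
    (memLp_of_ae_eq_or_eq hX3.aestronglyMeasurable hX3pm)
    (memLp_of_ae_eq_or_eq hX4.aestronglyMeasurable hX4pm) hXcpm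
    ((memLp_of_ae_eq_or_eq hε1.aestronglyMeasurable hε1pm).integrable le_rfl)
    ((memLp_of_ae_eq_or_eq hε2.aestronglyMeasurable hε2pm).integrable le_rfl)
    ((memLp_of_ae_eq_or_eq hε3.aestronglyMeasurable hε3pm).integrable le_rfl)
    ((memLp_of_ae_eq_or_eq hε4.aestronglyMeasurable hε4pm).integrable le_rfl)
    hci12 hci13 hci14 hci23 hci24 hci34 hindep1 hindep2 hindep3
    (hindep4.comp (ψ := fun p : ℝ × ℝ × ℝ × ℝ × ℝ => (p.1, p.2.1, p.2.2.1, p.2.2.2.1))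
      measurable_id (by fun_prop))
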